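/- Let e ∈ 𝔞 be an idempotent and suppose B is e-admissible, i.e. for every b ∈ B either ebe = b or ebe = 0. Write Ā := eAe and 𝔞̄ := e𝔞e, and regard S^{Ā}(n,d) and T^{Ā}_{𝔞̄}(n,d) as subalgebras of S^A(n,d) via the (Ā,𝔞̄)-basis B̄ := {b ∈ B : ebe = b}. Then ξ^e S^A(n,d) ξ^e = S^{Ā}(n,d) and ξ^e T^A_𝔞(n,d) ξ^e = T^{Ā}_{𝔞̄}(n,d). -/

import Mathlib

open Finset

open scoped Classical TensorProduct

noncomputable section

namespace GS

/-- A *good pair* `(A, 𝔞)`: a `𝕜`-superalgebra `A = ev ⊕ od` which is free as a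
`𝕜`-supermodule, together with a subalgebra `𝔞 = aa ⊆ A₀` such that `𝔞` and `A/𝔞` are free,
a complement `𝔠 = cc` of `𝔞` in `A₀`, and an `(A,𝔞)`-basis `B = B_𝔞 ⊔ B_𝔠 ⊔ B_1`
(encoded by `bas : Basis β 𝕜 A` with the partition `part : β → Fin 3`,
where `0` = `B_𝔞`, `1` = `B_𝔠`, `2` = `B_1`). -/
structure GoodPair (𝕜 A β : Type) [CommRing 𝕜] [NonUnitalRing A] [Module 𝕜 A] : Type where
  ev : Submodule 𝕜 A
  od : Submodule 𝕜 A
  compl : IsCompl ev od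
  mul_ee : ∀ a ∈ ev, ∀ b ∈ ev, a * b ∈ ev
  mul_eo : ∀ a ∈ ev, ∀ b ∈ od, a * b ∈ od
  mul_oe : ∀ a ∈ od, ∀ b ∈ ev, a * b ∈ od
  mul_oo : ∀ a ∈ od, ∀ b ∈ od, a * b ∈ ev
  free_ev : Module.Free 𝕜 ev
  free_od : Module.Free 𝕜 od
  aa : Submodule 𝕜 A
  aa_le_ev : aa ≤ ev
  aa_mul : ∀ a ∈ aa, ∀ b ∈ aa, a * b ∈ aa
  free_aa : Module.Free 𝕜 aa
  free_quot : Module.Free 𝕜 (A ⧸ aa)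
  cc : Submodule 𝕜 A
  aa_inf_cc : aa ⊓ cc = ⊥
  aa_sup_cc : aa ⊔ cc = ev
  bas : Module.Basis β 𝕜 A
  part : β → Fin 3
  bas_mem_aa : ∀ i, part i = 0 → bas i ∈ aa
  bas_mem_cc : ∀ i, part i = 1 → bas i ∈ cc
  bas_mem_od : ∀ i, part i = 2 → bas i ∈ od

variable {𝕜 A β : Type} [CommRing 𝕜] [NonUnitalRing A] [Module 𝕜 A]

/-- An element is homogeneous if it lies in the even or the odd part. -/
def Homog (P : GoodPair 𝕜 A β) (a : A) : Prop := a ∈ P.ev ∨ a ∈ P.od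

/-- `H`, the set of nonzero homogeneous elements of `A`. -/
def Hset (P : GoodPair 𝕜 A β) : Set A := {a | Homog P a ∧ a ≠ 0}

/-- `⟨𝐚,𝐜⟩ = #{(k,l) : k > l, a_k odd, c_l odd}` (the Koszul sign count). -/
def koz (od : Submodule 𝕜 A) {d : ℕ} (a c : Fin d → A) : ℕ :=
  (univ.filter fun kl : Fin d × Fin d => kl.2 < kl.1 ∧ a kl.1 ∈ od ∧ c kl.2 ∈ od).card

/-- `⟨σ;𝐚⟩ = #{(k,l) : k < l, σ⁻¹k > σ⁻¹l, a_k and a_l odd}`. -/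
def sgnc (od : Submodule 𝕜 A) {d : ℕ} (σ : Equiv.Perm (Fin d)) (a : Fin d → A) : ℕ :=
  (univ.filter fun kl : Fin d × Fin d =>
    kl.1 < kl.2 ∧ σ⁻¹ kl.2 < σ⁻¹ kl.1 ∧ a kl.1 ∈ od ∧ a kl.2 ∈ od).card

/-- `⟨𝐚,𝐫,𝐬⟩ = #{(k,l) : k < l, a_k, a_l odd, (a_k,r_k,s_k) > (a_l,r_l,s_l)}` with respect to
the fixed total order `ord` on `A × [1,n] × [1,n]`. -/
def ang {n : ℕ} (od : Submodule 𝕜 A) (ord : LinearOrder (A × Fin n × Fin n))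
    {d : ℕ} (a : Fin d → A) (r s : Fin d → Fin n) : ℕ :=
  (univ.filter fun kl : Fin d × Fin d =>
    kl.1 < kl.2 ∧ a kl.1 ∈ od ∧ a kl.2 ∈ od ∧
      ord.lt (a kl.2, r kl.2, s kl.2) (a kl.1, r kl.1, s kl.1)).card

/-- `(𝐚,𝐫,𝐬) ∈ Tri^H(n,d)`: all entries are nonzero homogeneous, and a repeated entry
triple forces evenness. -/
def IsTriH (P : GoodPair 𝕜 A β) {n d : ℕ} (a : Fin d → A) (r s : Fin d → Fin n) : Prop :=
  (∀ k, a k ∈ Hset P) ∧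
    ∀ k l : Fin d, k ≠ l → (a k, r k, s k) = (a l, r l, s l) → a k ∈ P.ev

/-- `(𝐛,𝐫,𝐬) ∈ Tri^B(n,d)` for words of basis elements. -/
def IsTriB (P : GoodPair 𝕜 A β) {n d : ℕ} (b : Fin d → β) (r s : Fin d → Fin n) : Prop :=
  ∀ k l : Fin d, k ≠ l → ((b k, r k, s k) : β × Fin n × Fin n) = (b l, r l, s l) →
    P.part (b k) ≠ 2

/-- Minimal length representatives of the cosets `(S_e × S_f)\S_{e+f}`. -/
def IsShuffle (e f : ℕ) (σ : Equiv.Perm (Fin (e + f))) : Prop :=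
  (∀ k l : Fin (e + f), k < l → (l : ℕ) < e → σ⁻¹ k < σ⁻¹ l) ∧
  (∀ k l : Fin (e + f), k < l → e ≤ (k : ℕ) → σ⁻¹ k < σ⁻¹ l)

/-- The tower of superalgebras `M_n(A)^{⊗d}`, `d ≥ 0`, axiomatised.  `X a r s` is the pure
tensor `ξ^{a_1}_{r_1,s_1} ⊗ ⋯ ⊗ ξ^{a_d}_{r_d,s_d}` of matrix units; it is multilinear in the
`A`-entries, the pure tensors of basis elements form a basis, multiplication is the sign-twisted
(Koszul) componentwise one, `act` is the right action of the symmetric groups by superalgebra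
automorphisms, `evT/odT` is the induced supermodule structure, `star` is the `*`-(shuffle)
product and `nab` gives the components of the deconcatenation coproduct `∇`. -/
structure Tower (𝕜 A β : Type) [CommRing 𝕜] [NonUnitalRing A] [Module 𝕜 A]
    (n : ℕ) (T : ℕ → Type) [∀ e, NonUnitalRing (T e)] [∀ e, Module 𝕜 (T e)]
    (P : GoodPair 𝕜 A β) : Type where
  X : ∀ {e : ℕ}, (Fin e → A) → (Fin e → Fin n) → (Fin e → Fin n) → T e
  X_update_add : ∀ {e : ℕ} (a : Fin e → A) (r s : Fin e → Fin n) (k : Fin e) (x y : A),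
    X (Function.update a k (x + y)) r s
      = X (Function.update a k x) r s + X (Function.update a k y) r s
  X_update_smul : ∀ {e : ℕ} (a : Fin e → A) (r s : Fin e → Fin n) (k : Fin e) (c : 𝕜) (x : A),
    X (Function.update a k (c • x)) r s = c • X (Function.update a k x) r s
  bas : ∀ e : ℕ, Module.Basis ((Fin e → β) × (Fin e → Fin n) × (Fin e → Fin n)) 𝕜 (T e)
  bas_eq : ∀ (e : ℕ) (b : Fin e → β) (r s : Fin e → Fin n),
    bas e (b, r, s) = X (fun k => P.bas (b k)) r s
  X_mul : ∀ {e : ℕ} (a c : Fin e → A) (r s t u : Fin e → Fin n),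
    (∀ k, Homog P (a k)) → (∀ k, Homog P (c k)) →
    X a r s * X c t u
      = if s = t then ((-1 : ℤ) ^ koz P.od a c) • X (fun k => a k * c k) r u else 0
  act : ∀ {e : ℕ}, Equiv.Perm (Fin e) → T e →ₗ[𝕜] T e
  act_act : ∀ {e : ℕ} (σ τ : Equiv.Perm (Fin e)) (x : T e), act τ (act σ x) = act (σ * τ) x
  act_mul : ∀ {e : ℕ} (σ : Equiv.Perm (Fin e)) (x y : T e), act σ (x * y) = act σ x * act σ y
  act_X : ∀ {e : ℕ} (σ : Equiv.Perm (Fin e)) (a : Fin e → A) (r s : Fin e → Fin n),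
    (∀ k, Homog P (a k)) →
    act σ (X a r s) = ((-1 : ℤ) ^ sgnc P.od σ a) • X (a ∘ σ) (r ∘ σ) (s ∘ σ)
  evT : ∀ e : ℕ, Submodule 𝕜 (T e)
  odT : ∀ e : ℕ, Submodule 𝕜 (T e)
  complT : ∀ e : ℕ, IsCompl (evT e) (odT e)
  X_mem_evT : ∀ {e : ℕ} (a : Fin e → A) (r s : Fin e → Fin n), (∀ k, Homog P (a k)) →
    Even (univ.filter fun k => a k ∈ P.od).card → X a r s ∈ evT e
  X_mem_odT : ∀ {e : ℕ} (a : Fin e → A) (r s : Fin e → Fin n), (∀ k, Homog P (a k)) →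
    ¬ Even (univ.filter fun k => a k ∈ P.od).card → X a r s ∈ odT e
  star : ∀ {e f : ℕ}, T e →ₗ[𝕜] T f →ₗ[𝕜] T (e + f)
  star_X : ∀ {e f : ℕ} (a : Fin e → A) (r s : Fin e → Fin n)
      (c : Fin f → A) (t u : Fin f → Fin n),
    star (X a r s) (X c t u)
      = ∑ σ ∈ univ.filter (IsShuffle e f),
          act σ (X (Fin.append a c) (Fin.append r t) (Fin.append s u))
  nab : ∀ e f : ℕ, T (e + f) →ₗ[𝕜] TensorProduct 𝕜 (T e) (T f)
  nab_X : ∀ (e f : ℕ) (a : Fin (e + f) → A) (r s : Fin (e + f) → Fin n),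
    nab e f (X a r s)
      = (X (a ∘ Fin.castAdd f) (r ∘ Fin.castAdd f) (s ∘ Fin.castAdd f))
          ⊗ₜ[𝕜] (X (a ∘ Fin.natAdd e) (r ∘ Fin.natAdd e) (s ∘ Fin.natAdd e))

variable {n : ℕ} {T : ℕ → Type} [∀ e, NonUnitalRing (T e)] [∀ e, Module 𝕜 (T e)]

/-- `ξ^𝐚_{𝐫,𝐬}`, the signed sum of the pure tensors over the `S_d`-orbit of `(𝐚,𝐫,𝐬)`. -/
def xiH {P : GoodPair 𝕜 A β} (D : Tower 𝕜 A β n T P) (ord : LinearOrder (A × Fin n × Fin n))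
    {d : ℕ} (a : Fin d → A) (r s : Fin d → Fin n) : T d :=
  ∑ w ∈ (univ.image fun σ : Equiv.Perm (Fin d) => (a ∘ σ, r ∘ σ, s ∘ σ)),
    ((-1 : ℤ) ^ (ang P.od ord a r s + ang P.od ord w.1 w.2.1 w.2.2)) • D.X w.1 w.2.1 w.2.2

/-- `ξ^𝐛_{𝐫,𝐬}` for a word `𝐛` of basis elements. -/
def xiB {P : GoodPair 𝕜 A β} (D : Tower 𝕜 A β n T P) (ord : LinearOrder (A × Fin n × Fin n))
    {d : ℕ} (b : Fin d → β) (r s : Fin d → Fin n) : T d :=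
  xiH D ord (fun k => P.bas (b k)) r s

/-- `[𝐛,𝐫,𝐬]^b_{r,s}`, the multiplicity of an entry triple in a word triple. -/
def mco {n d : ℕ} (b : Fin d → β) (r s : Fin d → Fin n) (w : β × Fin n × Fin n) : ℕ :=
  (univ.filter fun k => ((b k, r k, s k) : β × Fin n × Fin n) = w).card

/-- `∏ ([𝐛,𝐫,𝐬]^b_{r,s})!` over the entry triples whose basis element satisfies `sel`
(e.g. `sel i = (part i = 1)` gives `[𝐛,𝐫,𝐬]^!_𝔠`). -/
def facSel (sel : β → Prop) {n d : ℕ} (b : Fin d → β) (r s : Fin d → Fin n) : ℕ :=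
  ∏ w ∈ ((univ.image fun k => ((b k, r k, s k) : β × Fin n × Fin n)).filter fun w => sel w.1),
    Nat.factorial (mco b r s w)

/-- `η^𝐛_{𝐫,𝐬} := [𝐛,𝐫,𝐬]^!_𝔠 • ξ^𝐛_{𝐫,𝐬}`. -/
def eta {P : GoodPair 𝕜 A β} (D : Tower 𝕜 A β n T P) (ord : LinearOrder (A × Fin n × Fin n))
    {d : ℕ} (b : Fin d → β) (r s : Fin d → Fin n) : T d :=
  facSel (fun i => P.part i = 1) b r s • xiB D ord b r s

/-- `S^A(n,d) = (M_n(A)^{⊗d})^{S_d}`, the invariants. -/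
def SchurS {P : GoodPair 𝕜 A β} (D : Tower 𝕜 A β n T P) (d : ℕ) : Submodule 𝕜 (T d) where
  carrier := {x | ∀ σ : Equiv.Perm (Fin d), D.act σ x = x}
  add_mem' := by
    intro x y hx hy σ
    rw [map_add, hx σ, hy σ]
  zero_mem' := by
    intro σ; exact map_zero _
  smul_mem' := by
    intro c x hx σ
    rw [map_smul, hx σ]

/-- The generalized Schur algebra `T^A_𝔞(n,d)`, the `𝕜`-span of the `η^𝐛_{𝐫,𝐬}`,
`(𝐛,𝐫,𝐬) ∈ Tri^B(n,d)`. -/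
def SchurT {P : GoodPair 𝕜 A β} (D : Tower 𝕜 A β n T P) (ord : LinearOrder (A × Fin n × Fin n))
    (d : ℕ) : Submodule 𝕜 (T d) :=
  Submodule.span 𝕜 {x | ∃ b r s, IsTriB P b r s ∧ x = eta D ord b r s}

/-- `S^𝔞(n,d) = (M_n(𝔞)^{⊗d})^{S_d} ⊆ S^A(n,d)`. -/
def SchurA {P : GoodPair 𝕜 A β} (D : Tower 𝕜 A β n T P) (d : ℕ) : Submodule 𝕜 (T d) :=
  Submodule.span 𝕜 {x | ∃ a r s, (∀ k, a k ∈ P.aa) ∧ x = D.X a r s} ⊓ SchurS D d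

/-- `ξ^f = E^f ⊗ ⋯ ⊗ E^f` for `f ∈ A`. -/
def xiIdem {P : GoodPair 𝕜 A β} (D : Tower 𝕜 A β n T P) (f : A) (d : ℕ) : T d :=
  ∑ r : Fin d → Fin n, D.X (fun _ => f) r r

/-- Transport along an equality of degrees. -/
def tcast {e f : ℕ} (h : e = f) : T e ≃ₗ[𝕜] T f := by
  subst h; exact LinearEquiv.refl 𝕜 (T e)

/-- Iterated `*`-product `x_1 * x_2 * ⋯ * x_d` of degree-one pure tensors read off from a
word (associated to the left). -/
def starIter {P : GoodPair 𝕜 A β} (D : Tower 𝕜 A β n T P) :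
    ∀ (e : ℕ), (Fin e → A) → (Fin e → Fin n) → (Fin e → Fin n) → T e
  | 0, _, _, _ => D.X Fin.elim0 Fin.elim0 Fin.elim0
  | (e + 1), a, r, s =>
      D.star (starIter D e (a ∘ Fin.castSucc) (r ∘ Fin.castSucc) (s ∘ Fin.castSucc))
        (D.X (fun _ : Fin 1 => a (Fin.last e)) (fun _ => r (Fin.last e)) (fun _ => s (Fin.last e)))

/-- Iterated `*`-product of blockwise given elements. -/
def starBlocks {P : GoodPair 𝕜 A β} (D : Tower 𝕜 A β n T P) :
    ∀ (q : ℕ) (sz : Fin q → ℕ), (∀ m, T (sz m)) → T (∑ m, sz m)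
  | 0, sz, _ => cast (congrArg T (Fin.sum_univ_zero sz).symm) (D.X Fin.elim0 Fin.elim0 Fin.elim0)
  | (q + 1), sz, x =>
      cast (congrArg T (Fin.sum_univ_castSucc sz).symm)
        (D.star (starBlocks D q (fun m => sz m.castSucc) (fun m => x m.castSucc))
          (x (Fin.last q)))

/-- Concatenation of a tuple of words of lengths `sz 0, …, sz (q-1)`. -/
def concatB {α : Type} : ∀ {q : ℕ} (sz : Fin q → ℕ), (∀ m, Fin (sz m) → α) → Fin (∑ m, sz m) → α
  | 0, sz, _ => fun k => Fin.elim0 (cast (congrArg Fin (Fin.sum_univ_zero sz)) k)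
  | (q + 1), sz, f => fun k =>
      Fin.append (concatB (fun m => sz m.castSucc) (fun m => f m.castSucc)) (f (Fin.last q))
        (cast (congrArg Fin (Fin.sum_univ_castSucc sz)) k)

/-- A triple of words `(𝐛,𝐫,𝐬)`. -/
abbrev WordTriple (β : Type) (n d : ℕ) : Type :=
  (Fin d → β) × (Fin d → Fin n) × (Fin d → Fin n)

/-- The diagonal right place-permutation action on triples of words. -/
def wAct {d : ℕ} (w : WordTriple β n d) (σ : Equiv.Perm (Fin d)) : WordTriple β n d :=
  (w.1 ∘ σ, w.2.1 ∘ σ, w.2.2 ∘ σ)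

/-- The `k`-th entry triple `(b_k, r_k, s_k)` (with `b_k` realized in `A`). -/
def entryAt (P : GoodPair 𝕜 A β) {n d : ℕ} (w : WordTriple β n d) (k : Fin d) :
    A × Fin n × Fin n :=
  (P.bas (w.1 k), w.2.1 k, w.2.2 k)

/-- The lexicographic order on triples of words induced by the total order `ord`. -/
def wordLE (P : GoodPair 𝕜 A β) {n : ℕ} (ord : LinearOrder (A × Fin n × Fin n)) {d : ℕ}
    (w w' : WordTriple β n d) : Prop :=
  (∀ k, entryAt P w k = entryAt P w' k) ∨
    ∃ l : Fin d, (∀ k, k < l → entryAt P w k = entryAt P w' k) ∧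
      ord.lt (entryAt P w l) (entryAt P w' l)

/-- `Tri^B_0(n,d)`: the lexicographically minimal representatives of the `S_d`-orbits on
`Tri^B(n,d)`. -/
def IsTri0 (P : GoodPair 𝕜 A β) {n : ℕ} (ord : LinearOrder (A × Fin n × Fin n)) {d : ℕ}
    (w : WordTriple β n d) : Prop :=
  IsTriB P w.1 w.2.1 w.2.2 ∧ ∀ σ : Equiv.Perm (Fin d), wordLE P ord w (wAct w σ)

/-- The first `l` letters of each word. -/
def firstW {d : ℕ} (l : ℕ) (hl : l ≤ d) (w : WordTriple β n d) : WordTriple β n l :=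
  (fun k => w.1 ⟨k, lt_of_lt_of_le k.isLt hl⟩,
   fun k => w.2.1 ⟨k, lt_of_lt_of_le k.isLt hl⟩,
   fun k => w.2.2 ⟨k, lt_of_lt_of_le k.isLt hl⟩)

/-- The last `d - l` letters of each word. -/
def lastW {d : ℕ} (l : ℕ) (hl : l ≤ d) (w : WordTriple β n d) : WordTriple β n (d - l) :=
  (fun k => w.1 ⟨l + (k : ℕ), by have := k.isLt; omega⟩,
   fun k => w.2.1 ⟨l + (k : ℕ), by have := k.isLt; omega⟩,
   fun k => w.2.2 ⟨l + (k : ℕ), by have := k.isLt; omega⟩)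

/-- Concatenation of words. -/
def appF {α : Type} {d : ℕ} (l : ℕ) (hl : l ≤ d) (f : Fin l → α) (g : Fin (d - l) → α) :
    Fin d → α :=
  fun k => if hk : (k : ℕ) < l then f ⟨k, hk⟩ else g ⟨(k : ℕ) - l, by have := k.isLt; omega⟩

/-- Concatenation `T¹T²` of two triples of words. -/
def concatW {d : ℕ} (l : ℕ) (hl : l ≤ d) (p : WordTriple β n l × WordTriple β n (d - l)) :
    WordTriple β n d :=
  (appF l hl p.1.1 p.2.1, appF l hl p.1.2.1 p.2.2.1, appF l hl p.1.2.2 p.2.2.2)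

/-- `Spl_l(T)`, the set of `l`-splits of `T ∈ Tri^B_0(n,d)`. -/
def splitsF (P : GoodPair 𝕜 A β) {n : ℕ} (ord : LinearOrder (A × Fin n × Fin n)) {d : ℕ}
    (l : ℕ) (hl : l ≤ d) (w : WordTriple β n d) :
    Finset (WordTriple β n l × WordTriple β n (d - l)) :=
  (univ.image fun σ : Equiv.Perm (Fin d) =>
      (firstW l hl (wAct w σ), lastW l hl (wAct w σ))).filter
    fun p => IsTri0 P ord p.1 ∧ IsTri0 P ord p.2

/-- The number of inversions (= Coxeter length) of a permutation. -/
def invCount {d : ℕ} (σ : Equiv.Perm (Fin d)) : ℕ :=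
  (univ.filter fun kl : Fin d × Fin d => kl.1 < kl.2 ∧ σ kl.2 < σ kl.1).card

/-- The submodule `{x | x·ε = x}` (for an idempotent `ε` this is `R·ε`). -/
def rfix (𝕜 : Type) {R : Type} [CommRing 𝕜] [NonUnitalRing R] [Module 𝕜 R]
    [IsScalarTower 𝕜 R R] (ε : R) : Submodule 𝕜 R where
  carrier := {x | x * ε = x}
  add_mem' := by
    intro x y hx hy
    simp only [Set.mem_setOf_eq] at *
    rw [add_mul, hx, hy]
  zero_mem' := by simp
  smul_mem' := by
    intro c x hx
    simp only [Set.mem_setOf_eq] at *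
    rw [smul_mul_assoc, hx]

/-- Right `εSε`-module endomorphism property for a map of `S·ε = M ⊓ rfix ε`,
where `S` is the (possibly non-unital) algebra realized as the submodule `M` of `R`. -/
def IsEquivar (𝕜 : Type) {R : Type} [CommRing 𝕜] [NonUnitalRing R] [Module 𝕜 R]
    [IsScalarTower 𝕜 R R] (M : Submodule 𝕜 R) (ε : R)
    (f : ↥(M ⊓ rfix 𝕜 ε) →ₗ[𝕜] ↥(M ⊓ rfix 𝕜 ε)) : Prop :=
  ∀ (x : ↥(M ⊓ rfix 𝕜 ε)) (c : R), c ∈ M → ε * c * ε = c →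
    ∀ h : (x : R) * c ∈ M ⊓ rfix 𝕜 ε,
      ((f ⟨(x : R) * c, h⟩ : ↥(M ⊓ rfix 𝕜 ε)) : R) = (f x : R) * c

/-- `ε` is a *double centralizer idempotent* for the algebra `M ⊆ R`: the left
multiplication map `λ : M → End_{εMε}(Mε)` is bijective. -/
def IsDCI (𝕜 : Type) {R : Type} [CommRing 𝕜] [NonUnitalRing R] [Module 𝕜 R]
    [IsScalarTower 𝕜 R R] (M : Submodule 𝕜 R) (ε : R) : Prop :=
  (∀ s ∈ M, ∀ s' ∈ M, (∀ x ∈ M ⊓ rfix 𝕜 ε, s * x = s' * x) → s = s') ∧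
  (∀ f : ↥(M ⊓ rfix 𝕜 ε) →ₗ[𝕜] ↥(M ⊓ rfix 𝕜 ε), IsEquivar 𝕜 M ε f →
    ∃ s ∈ M, ∀ x : ↥(M ⊓ rfix 𝕜 ε), (f x : R) = s * (x : R))

/-- The pure tensor map as a multilinear map in its `A`-entries. -/
def Xml {P : GoodPair 𝕜 A β} (D : Tower 𝕜 A β n T P) {d : ℕ} (r s : Fin d → Fin n) :
    MultilinearMap 𝕜 (fun _ : Fin d => A) (T d) where
  toFun a := D.X a r s
  map_update_add' := by
    intro inst a k x y
    have : inst = fun a b => instDecidableEqFin d a b := Subsingleton.elim _ _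
    subst this
    exact D.X_update_add a r s k x y
  map_update_smul' := by
    intro inst a k c x
    have : inst = fun a b => instDecidableEqFin d a b := Subsingleton.elim _ _
    subst this
    exact D.X_update_smul a r s k c x

theorem Xml_apply {P : GoodPair 𝕜 A β} (D : Tower 𝕜 A β n T P) {d : ℕ} (r s : Fin d → Fin n)
    (a : Fin d → A) : Xml D r s a = D.X a r s := rfl

theorem X_zero {P : GoodPair 𝕜 A β} (D : Tower 𝕜 A β n T P) {d : ℕ} (a : Fin d → A)
    (r s : Fin d → Fin n) (k : Fin d) (hk : a k = 0) : D.X a r s = 0 := by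
  rw [← Xml_apply]; exact (Xml D r s).map_coord_zero k hk

theorem homog_bas (P : GoodPair 𝕜 A β) (i : β) : Homog P (P.bas i) := by
  have h : P.part i = 0 ∨ P.part i = 1 ∨ P.part i = 2 := by
    generalize P.part i = x
    fin_cases x <;> simp
  rcases h with h | h | h
  · exact Or.inl (P.aa_le_ev (P.bas_mem_aa i h))
  · refine Or.inl ?_
    rw [← P.aa_sup_cc]
    exact Submodule.mem_sup_right (P.bas_mem_cc i h)
  · exact Or.inr (P.bas_mem_od i h)

theorem not_odd (P : GoodPair 𝕜 A β) {e : A} (he : e ∈ P.aa) (h0 : e ≠ 0) : e ∉ P.od := by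
  intro h
  exact h0 ((Submodule.disjoint_def.mp P.compl.disjoint) e (P.aa_le_ev he) h)

theorem X_e_mul {P : GoodPair 𝕜 A β} (D : Tower 𝕜 A β n T P) {d : ℕ} {e : A} (he : e ∈ P.aa)
    (c : Fin d → A) (hc : ∀ k, Homog P (c k)) (t r s : Fin d → Fin n) :
    D.X (fun _ => e) t t * D.X c r s = if t = r then D.X (fun k => e * c k) r s else 0 := by
  rw [D.X_mul _ _ _ _ _ _ (fun _ => Or.inl (P.aa_le_ev he)) hc]
  by_cases h : t = r
  · subst h
    simp only [if_true]
    by_cases h0 : e = 0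
    · rcases Nat.eq_zero_or_pos d with hd | hd
      · subst hd
        simp [koz]
      · rw [X_zero D (fun k => e * c k) t s ⟨0, hd⟩ (by simp [h0]), smul_zero]
    · have : koz P.od (fun _ => e) c = 0 := by
        simp [koz, not_odd P he h0]
      rw [this]; simp
  · simp [h]

theorem X_mul_e {P : GoodPair 𝕜 A β} (D : Tower 𝕜 A β n T P) {d : ℕ} {e : A} (he : e ∈ P.aa)
    (c : Fin d → A) (hc : ∀ k, Homog P (c k)) (t r s : Fin d → Fin n) :
    D.X c r s * D.X (fun _ => e) t t = if s = t then D.X (fun k => c k * e) r s else 0 := by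
  rw [D.X_mul _ _ _ _ _ _ hc (fun _ => Or.inl (P.aa_le_ev he))]
  by_cases h : s = t
  · subst h
    simp only [if_true]
    by_cases h0 : e = 0
    · rcases Nat.eq_zero_or_pos d with hd | hd
      · subst hd
        simp [koz]
      · rw [X_zero D (fun k => c k * e) r s ⟨0, hd⟩ (by simp [h0]), smul_zero]
    · have : koz P.od c (fun _ => e) = 0 := by
        simp [koz, not_odd P he h0]
      rw [this]; simp
  · simp [h]

theorem act_xiIdem {P : GoodPair 𝕜 A β} (D : Tower 𝕜 A β n T P) {d : ℕ} {e : A}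
    (he : e ∈ P.aa) (σ : Equiv.Perm (Fin d)) : D.act σ (xiIdem D e d) = xiIdem D e d := by
  have key : ∀ r : Fin d → Fin n,
      D.act σ (D.X (fun _ => e) r r) = D.X (fun _ => e) (r ∘ σ) (r ∘ σ) := by
    intro r
    rw [D.act_X _ _ _ _ (fun _ => Or.inl (P.aa_le_ev he))]
    have hcomp : ((fun _ => e) ∘ σ : Fin d → A) = fun _ => e := rfl
    rw [hcomp]
    by_cases h0 : e = 0
    · rcases Nat.eq_zero_or_pos d with hd | hd
      · subst hd
        simp [sgnc]
      · rw [X_zero D (fun _ => e) _ _ ⟨0, hd⟩ h0, smul_zero]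
    · have : sgnc P.od σ (fun _ => e) = 0 := by
        simp [sgnc, not_odd P he h0]
      rw [this]; simp
  unfold xiIdem
  rw [map_sum]
  simp only [key]
  exact Equiv.sum_comp (Equiv.arrowCongr σ.symm (Equiv.refl (Fin n)))
    (fun r => D.X (fun _ => e) r r)

/-- Compression of a pure tensor of homogeneous elements. -/
theorem phi_homog {P : GoodPair 𝕜 A β} (D : Tower 𝕜 A β n T P) {d : ℕ} {e : A}
    (he : e ∈ P.aa) (c : Fin d → A) (hc : ∀ k, Homog P (c k)) (r s : Fin d → Fin n) :
    xiIdem D e d * (D.X c r s * xiIdem D e d) = D.X (fun k => e * c k * e) r s := by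
  have h1 : D.X c r s * xiIdem D e d = D.X (fun k => c k * e) r s := by
    unfold xiIdem
    rw [Finset.mul_sum]
    simp only [X_mul_e D he c hc]
    simp
  have hc' : ∀ k, Homog P (c k * e) := by
    intro k
    rcases hc k with h | h
    · exact Or.inl (P.mul_ee _ h _ (P.aa_le_ev he))
    · exact Or.inr (P.mul_oe _ h _ (P.aa_le_ev he))
  rw [h1]
  unfold xiIdem
  rw [Finset.sum_mul]
  simp only [X_e_mul D he _ hc']
  simp [mul_assoc]

/-- Compression of an arbitrary pure tensor. -/
theorem phi_X [SMulCommClass 𝕜 A A] [IsScalarTower 𝕜 A A]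
    [∀ e, SMulCommClass 𝕜 (T e) (T e)] [∀ e, IsScalarTower 𝕜 (T e) (T e)]
    {P : GoodPair 𝕜 A β} (D : Tower 𝕜 A β n T P) {d : ℕ} {e : A}
    (he : e ∈ P.aa) (c : Fin d → A) (r s : Fin d → Fin n) :
    xiIdem D e d * (D.X c r s * xiIdem D e d) = D.X (fun k => e * c k * e) r s := by
  have : (((LinearMap.mulLeft 𝕜 (xiIdem D e d)) ∘ₗ
        (LinearMap.mulRight 𝕜 (xiIdem D e d))).compMultilinearMap (Xml D r s))
      = (Xml D r s).compLinearMap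
          (fun _ => (LinearMap.mulRight 𝕜 e) ∘ₗ (LinearMap.mulLeft 𝕜 e)) := by
    refine Module.Basis.ext_multilinear (fun _ => P.bas) ?_
    intro v
    exact phi_homog D he (fun k => P.bas (v k)) (fun k => homog_bas P _) r s
  exact congrArg (fun f => f c) this

/-- Let `e ∈ 𝔞` be an idempotent with `B` `e`-admissible.  Then
`ξ^e S^A(n,d) ξ^e = S^{eAe}(n,d)` and `ξ^e T^A_𝔞(n,d) ξ^e = T^{eAe}_{e𝔞e}(n,d)`, where
`S^{eAe}(n,d)` is realized inside `S^A(n,d)` as the invariant part of the span of the pure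
tensors with entries in `eAe`, and `T^{eAe}_{e𝔞e}(n,d)` as the span of the `η^𝐛_{𝐫,𝐬}` over
triples in `Tri^{B̄}(n,d)`, `B̄ = {b ∈ B : ebe = b}`. -/
theorem statement12 {𝕜 A β : Type} [CommRing 𝕜] [IsDomain 𝕜] [CharZero 𝕜]
    [NonUnitalRing A] [Module 𝕜 A] [SMulCommClass 𝕜 A A] [IsScalarTower 𝕜 A A]
    {n : ℕ} (hn : 0 < n) {T : ℕ → Type} [∀ e, NonUnitalRing (T e)] [∀ e, Module 𝕜 (T e)]
    [∀ e, SMulCommClass 𝕜 (T e) (T e)] [∀ e, IsScalarTower 𝕜 (T e) (T e)]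
    (P : GoodPair 𝕜 A β) (D : Tower 𝕜 A β n T P) (ord : LinearOrder (A × Fin n × Fin n))
    (d : ℕ) (e : A) (he : e ∈ P.aa) (hidem : e * e = e)
    (hadm : ∀ i : β, e * P.bas i * e = P.bas i ∨ e * P.bas i * e = 0) :
    (Submodule.map
        ((LinearMap.mulLeft 𝕜 (xiIdem D e d)) ∘ₗ (LinearMap.mulRight 𝕜 (xiIdem D e d)))
        (SchurS D d)
      = Submodule.span 𝕜 {x | ∃ (a : Fin d → A) (r s : Fin d → Fin n),
          (∀ k, ∃ y : A, a k = e * y * e) ∧ x = D.X a r s} ⊓ SchurS D d) ∧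
    (Submodule.map
        ((LinearMap.mulLeft 𝕜 (xiIdem D e d)) ∘ₗ (LinearMap.mulRight 𝕜 (xiIdem D e d)))
        (SchurT D ord d)
      = Submodule.span 𝕜 {x | ∃ (b : Fin d → β) (r s : Fin d → Fin n),
          IsTriB P b r s ∧ (∀ k, e * P.bas (b k) * e = P.bas (b k)) ∧
          x = eta D ord b r s}) := by
  set φ := ((LinearMap.mulLeft 𝕜 (xiIdem D e d)) ∘ₗ (LinearMap.mulRight 𝕜 (xiIdem D e d)))
    with hφ
  have hφX : ∀ (c : Fin d → A) (r s : Fin d → Fin n),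
      φ (D.X c r s) = D.X (fun k => e * c k * e) r s := fun c r s => phi_X D he c r s
  constructor
  · apply le_antisymm
    · rintro _ ⟨x, hx, rfl⟩
      refine ⟨?_, ?_⟩
      · have hx' : x ∈ Submodule.span 𝕜 (Set.range (D.bas d)) := by
          rw [(D.bas d).span_eq]; trivial
        clear hx
        induction hx' using Submodule.span_induction with
        | mem x h =>
          obtain ⟨⟨b, r, s⟩, rfl⟩ := h
          rw [D.bas_eq, hφX]
          exact Submodule.subset_span ⟨_, r, s, fun k => ⟨_, rfl⟩, rfl⟩
        | zero => rw [map_zero]; exact Submodule.zero_mem _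
        | add x y _ _ hx hy => rw [map_add]; exact Submodule.add_mem _ hx hy
        | smul c x _ hx => rw [map_smul]; exact Submodule.smul_mem _ c hx
      · intro σ
        change D.act σ (xiIdem D e d * (x * xiIdem D e d)) = xiIdem D e d * (x * xiIdem D e d)
        rw [D.act_mul, D.act_mul, act_xiIdem D he, hx σ]
    · rintro x ⟨hx, hxS⟩
      refine ⟨x, hxS, ?_⟩
      clear hxS
      induction hx using Submodule.span_induction with
      | mem x h =>
        obtain ⟨a, r, s, ha, rfl⟩ := h
        rw [hφX]
        congr 1
        funext k
        obtain ⟨y, hy⟩ := ha k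
        rw [hy, ← mul_assoc, ← mul_assoc, hidem, mul_assoc, hidem]
      | zero => rw [map_zero]
      | add x y _ _ hx hy => rw [map_add, hx, hy]
      | smul c x _ hx => rw [map_smul, hx]
  · have hfix : ∀ (b : Fin d → β) (r s : Fin d → Fin n),
        (∀ k, e * P.bas (b k) * e = P.bas (b k)) → φ (eta D ord b r s) = eta D ord b r s := by
      intro b r s hb
      unfold eta xiB xiH
      rw [map_nsmul, map_sum]
      congr 1
      refine Finset.sum_congr rfl ?_
      intro w hw
      obtain ⟨σ, -, rfl⟩ := Finset.mem_image.mp hw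
      rw [map_zsmul, hφX]
      congr 2
      funext k
      exact hb (σ k)
    have hzero : ∀ (b : Fin d → β) (r s : Fin d → Fin n) (k : Fin d),
        e * P.bas (b k) * e = 0 → φ (eta D ord b r s) = 0 := by
      intro b r s k hb
      unfold eta xiB xiH
      rw [map_nsmul, map_sum, Finset.sum_eq_zero, smul_zero]
      intro w hw
      obtain ⟨σ, -, rfl⟩ := Finset.mem_image.mp hw
      rw [map_zsmul, hφX, X_zero D _ _ _ (σ⁻¹ k) (by simpa using hb), smul_zero]
    unfold SchurT
    rw [Submodule.map_span]
    apply le_antisymm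
    · rw [Submodule.span_le]
      rintro _ ⟨_, ⟨b, r, s, hT, rfl⟩, rfl⟩
      by_cases hb : ∀ k, e * P.bas (b k) * e = P.bas (b k)
      · rw [hfix b r s hb]
        exact Submodule.subset_span ⟨b, r, s, hT, hb, rfl⟩
      · push Not at hb
        obtain ⟨k, hk⟩ := hb
        rw [hzero b r s k ((hadm (b k)).resolve_left hk)]
        exact Submodule.zero_mem _
    · rw [Submodule.span_le]
      rintro _ ⟨b, r, s, hT, hb, rfl⟩
      exact Submodule.subset_span ⟨eta D ord b r s, ⟨b, r, s, hT, rfl⟩, hfix b r s hb⟩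

end GS
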